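/- Let G be the CPDAG of the Markov equivalence class of a DAG. Then G contains no partially directed cycle. -/

import Mathlib

/-- A directed acyclic graph on node set `V`: a directed edge relation with no
directed cycles (no edge `a → b` together with a directed path from `b` back to `a`). -/
structure Dag (V : Type*) where
  edge : V → V → Prop
  acyclic : ∀ a b : V, edge a b → ¬ Relation.ReflTransGen edge b a

variable {V : Type*}

namespace Dag

/-- `a` is an ancestor of `b` (equivalently, `b` is a descendant of `a`):
there is a directed path from `a` to `b`; every node is its own ancestor. -/
def Anc (D : Dag V) (a b : V) : Prop := Relation.ReflTransGen D.edge a b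

/-- `a` and `b` are adjacent (joined by an edge in either direction). -/
def Adj (D : Dag V) (a b : V) : Prop := D.edge a b ∨ D.edge b a

/-- The parents of `x` in the DAG `D`. -/
def Pa (D : Dag V) (x : V) : Set V := {a | D.edge a x}

/-- The Markov blanket of `x`: parents, children, and parents of children of `x`
(excluding `x` itself). -/
def MB (D : Dag V) (x : V) : Set V :=
  {v | v ≠ x ∧ (D.edge v x ∨ D.edge x v ∨ ∃ c : V, D.edge x c ∧ D.edge v c)}

end Dag

/-- A path between `x` and `y` with respect to an adjacency relation `A`:
a sequence of distinct nodes, starting at `x` and ending at `y`, in which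
consecutive nodes are adjacent. `n` is the number of edges of the path. -/
structure GPath (A : V → V → Prop) (x y : V) where
  n : ℕ
  f : Fin (n + 1) → V
  inj : Function.Injective f
  first : f ⟨0, by omega⟩ = x
  last : f ⟨n, by omega⟩ = y
  adj : ∀ i : Fin n, A (f i.castSucc) (f i.succ)

namespace GPath

/-- The non-endpoint node at position `i` of the path `p` is a collider with respect
to the directed edge relation `E`: both incident edges of the path point into it. -/
def ColliderAt {A : V → V → Prop} {x y : V} (p : GPath A x y)
    (E : V → V → Prop) (i : ℕ) : Prop :=
  ∃ (_ : 0 < i) (_ : i < p.n),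
    E (p.f ⟨i - 1, by omega⟩) (p.f ⟨i, by omega⟩) ∧
    E (p.f ⟨i + 1, by omega⟩) (p.f ⟨i, by omega⟩)

/-- The path `p` is blocked by the node set `S` in the DAG `D`: it contains a
non-collider that lies in `S`, or a collider such that neither the collider nor any
of its descendants lies in `S`. -/
def Blocked {A : V → V → Prop} {x y : V} (p : GPath A x y)
    (D : Dag V) (S : Set V) : Prop :=
  ∃ (i : ℕ) (_ : 0 < i) (_ : i < p.n),
    (¬ p.ColliderAt D.edge i ∧ p.f ⟨i, by omega⟩ ∈ S) ∨
    (p.ColliderAt D.edge i ∧ ∀ d : V, D.Anc (p.f ⟨i, by omega⟩) d → d ∉ S)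

end GPath

namespace Dag

/-- `x` and `y` are d-separated by `S` in the DAG `D`: every path between `x` and `y`
is blocked by `S`. -/
def dSep (D : Dag V) (x y : V) (S : Set V) : Prop :=
  ∀ p : GPath D.Adj x y, p.Blocked D S

/-- Two DAGs on the same node set are Markov equivalent if they have exactly the same
d-separation relations. -/
def MEquiv (D D' : Dag V) : Prop :=
  ∀ (x y : V) (S : Set V), D.dSep x y S ↔ D'.dSep x y S

/-- The edge between `a` and `b` is directed `a → b` in the CPDAG of the Markov
equivalence class of `D`: the edge `a → b` holds in every DAG Markov equivalent to `D`. -/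
def CpDir (D : Dag V) (a b : V) : Prop :=
  ∀ D' : Dag V, D.MEquiv D' → D'.edge a b

/-- The edge between `a` and `b` is undirected (`a − b`) in the CPDAG: `a` and `b` are
adjacent (the CPDAG has the same adjacencies as the DAGs of the MEC) but the edge is not
directed either way in the CPDAG. -/
def CpUndir (D : Dag V) (a b : V) : Prop :=
  D.Adj a b ∧ ¬ D.CpDir a b ∧ ¬ D.CpDir b a

/-- `Pa_G(a)`: the nodes with a directed edge into `a` in the CPDAG. -/
def CpPa (D : Dag V) (a : V) : Set V := {p | D.CpDir p a}

/-- `Ch_G(a)`: the nodes `b` with the edge directed `a → b` in the CPDAG. -/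
def CpCh (D : Dag V) (a : V) : Set V := {c | D.CpDir a c}

/-- `Sib_G(a)`: the nodes joined to `a` by an undirected edge in the CPDAG. -/
def CpSib (D : Dag V) (a : V) : Set V := {s | D.CpUndir a s}

end Dag

namespace GPath

/-- `p` is a possibly directed path in the CPDAG: no edge on it is directed
backwards (as `V_i ← V_{i+1}`) in the CPDAG. -/
def CpPossiblyDirected {D : Dag V} {x y : V} (p : GPath D.Adj x y) : Prop :=
  ∀ i : Fin p.n, ¬ D.CpDir (p.f i.succ) (p.f i.castSucc)

/-- `p` is a (fully) directed path in the CPDAG: every edge on it is directed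
forwards in the CPDAG. -/
def CpDirected {D : Dag V} {x y : V} (p : GPath D.Adj x y) : Prop :=
  ∀ i : Fin p.n, D.CpDir (p.f i.castSucc) (p.f i.succ)

/-- `p` is a directed path from `x` to `y` in the DAG `D` itself. -/
def DirectedIn {D : Dag V} {x y : V} (p : GPath D.Adj x y) : Prop :=
  ∀ i : Fin p.n, D.edge (p.f i.castSucc) (p.f i.succ)

/-- `p` is unshielded: for every three consecutive nodes on it, the first and the
third are non-adjacent. -/
def Unshielded {D : Dag V} {x y : V} (p : GPath D.Adj x y) : Prop :=
  ∀ (i : ℕ) (_ : i + 2 ≤ p.n), ¬ D.Adj (p.f ⟨i, by omega⟩) (p.f ⟨i + 2, by omega⟩)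

end GPath

namespace Dag

/-- `x` is a possible ancestor of `y` in the CPDAG: there is a possibly directed path
from `x` to `y`. -/
def PossAn (D : Dag V) (x y : V) : Prop :=
  ∃ p : GPath D.Adj x y, p.CpPossiblyDirected

/-- `x` is an explicit ancestor of `y` in the CPDAG: there is a fully directed path
from `x` to `y` in the CPDAG. -/
def ExplAn (D : Dag V) (x y : V) : Prop :=
  ∃ p : GPath D.Adj x y, p.CpDirected

/-- The CPDAG is amenable relative to `(x, y)`: every possibly directed path from
`x` to `y` starts with a directed edge out of `x`. -/
def Amenable (D : Dag V) (x y : V) : Prop :=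
  ∀ p : GPath D.Adj x y, p.CpPossiblyDirected →
    ∀ _ : 0 < p.n, D.CpDir (p.f ⟨0, by omega⟩) (p.f ⟨1, by omega⟩)

/-- `S` is a valid adjustment set for `(x, y)` in the DAG `D`:
(i) no element of `S` is a descendant of any node `w ≠ x` lying on a directed path
from `x` to `y`, and (ii) every path between `x` and `y` that is not a directed path
from `x` to `y` is blocked by `S`. -/
def ValidAdjustment (D : Dag V) (x y : V) (S : Set V) : Prop :=
  (∀ s ∈ S, ∀ w : V, w ≠ x → D.Anc x w → D.Anc w y → ¬ D.Anc w s) ∧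
  (∀ p : GPath D.Adj x y, ¬ p.DirectedIn → p.Blocked D S)

/-- `Cn_D(x, y)`: the nodes `w ≠ x` lying on some directed path from `x` to `y` in `D`. -/
def Cn (D : Dag V) (x y : V) : Set V := {w | w ≠ x ∧ D.Anc x w ∧ D.Anc w y}

end Dag


namespace Dag

theorem irr (D : Dag V) (a : V) : ¬ D.edge a a := fun h => D.acyclic a a h .refl

theorem asy (D : Dag V) {a b : V} (h : D.edge a b) : ¬ D.edge b a :=
  fun h' => D.acyclic a b h (.single h')

theorem tri (D : Dag V) {a b c : V} (h : D.edge a b) (h' : D.edge b c) (ha : D.Adj a c) :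
    D.edge a c := by
  rcases ha with ha | ha
  · exact ha
  · exact (D.acyclic c a ha ((Relation.ReflTransGen.single h).tail h')).elim

theorem Adj.sy {D : Dag V} {a b : V} (h : D.Adj a b) : D.Adj b a := Or.symm h

theorem Adj.ne' {D : Dag V} {a b : V} (h : D.Adj a b) : a ≠ b := by
  rintro rfl
  rcases h with h | h <;> exact D.irr _ h

/-- number of ancestors -/
noncomputable def rk (D : Dag V) (v : V) : ℕ := Set.ncard {a | D.Anc a v}

theorem rk_lt [Finite V] (D : Dag V) {a b : V} (h : D.edge a b) : D.rk a < D.rk b := by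
  apply Set.ncard_lt_ncard _ (Set.toFinite _)
  refine ⟨fun c hc => Relation.ReflTransGen.tail hc h, fun hs => ?_⟩
  have : b ∈ {c | D.Anc c a} := hs Relation.ReflTransGen.refl
  exact D.acyclic a b h this

theorem acyclic_of_rank {E : V → V → Prop} (r : V → ℕ) (hr : ∀ a b, E a b → r a < r b) :
    ∀ a b : V, E a b → ¬ Relation.ReflTransGen E b a := by
  intro a b h h'
  have hle : ∀ c, Relation.ReflTransGen E b c → r b ≤ r c := by
    intro c hc
    induction hc with
    | refl => exact le_rfl
    | tail _ h2 ih => exact ih.trans (hr _ _ h2).le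
  have := hle a h'
  have hlt := hr _ _ h
  omega

/-- same skeleton and v-structures -/
def SkV (D D' : Dag V) : Prop :=
  (∀ a b, D.Adj a b ↔ D'.Adj a b) ∧
  ∀ a b c, a ≠ c → ¬ D.Adj a c → ((D.edge a b ∧ D.edge c b) ↔ (D'.edge a b ∧ D'.edge c b))

theorem SkV.refl (D : Dag V) : SkV D D := ⟨fun _ _ => Iff.rfl, fun _ _ _ _ _ => Iff.rfl⟩

theorem SkV.symm {D D' : Dag V} (h : SkV D D') : SkV D' D :=
  ⟨fun a b => (h.1 a b).symm, fun a b c hac hn =>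
    (h.2 a b c hac (fun h' => hn ((h.1 a c).1 h'))).symm⟩

theorem SkV.trans {D D' D'' : Dag V} (h : SkV D D') (h' : SkV D' D'') : SkV D D'' :=
  ⟨fun a b => (h.1 a b).trans (h'.1 a b), fun a b c hac hn =>
    (h.2 a b c hac hn).trans (h'.2 a b c hac (fun h2 => hn ((h.1 a c).2 h2)))⟩

inductive Meek (D : Dag V) : V → V → Prop
  | vs {a b c : V} : D.edge a b → D.edge c b → a ≠ c → ¬ D.Adj a c → Meek D a b
  | r1 {a b c : V} : Meek D a b → D.edge b c → a ≠ c → ¬ D.Adj a c → Meek D b c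
  | r2 {a b c : V} : Meek D a b → Meek D b c → D.Adj a c → Meek D a c
  | r3 {a b d e : V} : D.Adj a b → D.Adj a d → D.Adj a e → Meek D d b → Meek D e b → d ≠ e →
      ¬ D.Adj d e → ¬ (D.edge d a ∧ D.edge e a) → Meek D a b

theorem Meek.sound {D D' : Dag V} (hs : SkV D D') {a b : V} (h : Meek D a b) : D'.edge a b := by
  induction h with
  | vs h1 h2 h3 h4 => exact ((hs.2 _ _ _ h3 h4).1 ⟨h1, h2⟩).1
  | r1 h1 h2 h3 h4 ih =>
    rcases (hs.1 _ _).1 (Or.inl h2) with h | h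
    · exact h
    · exact (D.asy h2 ((hs.2 _ _ _ h3 h4).2 ⟨ih, h⟩).2).elim
  | r2 h1 h2 h3 ih1 ih2 => exact D'.tri ih1 ih2 ((hs.1 _ _).1 h3)
  | r3 hab had hae h1 h2 hne hn hc ih1 ih2 =>
    rcases (hs.1 _ _).1 hab with h | h
    · exact h
    · exact (hc ((hs.2 _ _ _ hne hn).2 ⟨D'.tri ih1 h ((hs.1 _ _).1 had.sy),
        D'.tri ih2 h ((hs.1 _ _).1 hae.sy)⟩)).elim

theorem Meek.edge {D : Dag V} {a b : V} (h : Meek D a b) : D.edge a b := h.sound (SkV.refl D)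

theorem Meek.r1' {D : Dag V} {a b c : V} (h : Meek D a b) (hbc : D.Adj b c) (hne : a ≠ c)
    (hn : ¬ D.Adj a c) : Meek D b c ∨ Meek D c b := by
  rcases hbc with hbc | hbc
  · exact .inl (.r1 h hbc hne hn)
  · exact .inr (.vs hbc h.edge hne.symm (fun h => hn h.sy))

theorem Meek.prop {D : Dag V} {a b : V} (h : Meek D a b) : ∀ c, D.Adj b c → ¬ Meek D b c →
    ¬ Meek D c b → Meek D a c := by
  induction h with
  | @vs a b d h1 h2 h3 h4 =>
    intro c hbc n1 n2
    have hab : Meek D a b := .vs h1 h2 h3 h4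
    have hdb : Meek D d b := .vs h2 h1 h3.symm (fun h => h4 h.sy)
    have hac' : a ≠ c := by rintro rfl; exact n2 hab
    have hdc' : d ≠ c := by rintro rfl; exact n2 hdb
    have hac : D.Adj a c := by
      by_contra hac
      have := hab.r1' hbc hac' hac
      tauto
    have hdc : D.Adj d c := by
      by_contra hdc
      have := hdb.r1' hbc hdc' hdc
      tauto
    by_contra hn
    have hca : ¬ Meek D c a := fun h => n2 (.r2 h hab hbc.sy)
    have hdc2 : ¬ Meek D d c := fun h => by
      have := h.r1' hac.sy h3.symm (fun h => h4 h.sy)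
      tauto
    apply n2
    refine .r3 hbc.sy hac.sy hdc.sy hab hdb h3 h4 ?_
    rintro ⟨h5, h6⟩
    exact hn (.vs h5 h6 h3 h4)
  | @r1 e a b h1 h2 h3 h4 ih =>
    intro c hbc n1 n2
    have hab : Meek D a b := .r1 h1 h2 h3 h4
    have hac' : a ≠ c := by rintro rfl; exact n2 hab
    have hac : D.Adj a c := by
      by_contra hac
      have := hab.r1' hbc hac' hac
      tauto
    by_contra hn
    have hca : ¬ Meek D c a := fun h => n2 (.r2 h hab hbc.sy)
    have := (ih c hac hn hca).r1' hbc.sy h3 h4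
    tauto
  | @r2 a e b h1 h2 h3 ih1 ih2 =>
    intro c hbc n1 n2
    have hab : Meek D a b := .r2 h1 h2 h3
    have hac' : a ≠ c := by rintro rfl; exact n2 hab
    have hac : D.Adj a c := by
      by_contra hac
      have := hab.r1' hbc hac' hac
      tauto
    exact .r2 h1 (ih2 c hbc n1 n2) hac
  | @r3 a b d e hab' had hae h1 h2 hne hn hc ih1 ih2 =>
    intro c hbc n1 n2
    have hab : Meek D a b := .r3 hab' had hae h1 h2 hne hn hc
    have hac' : a ≠ c := by rintro rfl; exact n2 hab
    have hac : D.Adj a c := by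
      by_contra hac
      have := hab.r1' hbc hac' hac
      tauto
    exact .r3 hac had hae (ih1 c hbc n1 n2) (ih2 c hbc n1 n2) hne hn hc

/-- perfect ordering (latest vertex at the head) -/
def Perf (A : V → V → Prop) : List V → Prop
  | [] => True
  | v :: l => (∀ a ∈ l, ∀ b ∈ l, A v a → A v b → a ≠ b → A a b) ∧ Perf A l

theorem perf_clique {A : V → V → Prop} (l : List V)
    (h : ∀ a ∈ l, ∀ b ∈ l, a ≠ b → A a b) : Perf A l := by
  induction l with
  | nil => trivial
  | cons v l ih =>
    exact ⟨fun a ha b hb _ _ hne => h a (by simp [ha]) b (by simp [hb]) hne,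
      ih fun a ha b hb => h a (by simp [ha]) b (by simp [hb])⟩

theorem perf_replace {A : V → V → Prop} (r m m' : List V) (t : V) (h : Perf A (r ++ m))
    (hm : ∀ z ∈ m', z ∈ m ∨ z = t) (hr : ∀ v ∈ r, ¬ A v t) (hp : Perf A m') :
    Perf A (r ++ m') := by
  induction r with
  | nil => exact hp
  | cons v r ih =>
    refine ⟨fun a ha b hb h1 h2 hne => ?_, ih h.2 fun v hv => hr v (by simp [hv])⟩
    have key : ∀ c ∈ r ++ m', A v c → c ∈ r ++ m := by
      intro c hc hvc
      rcases List.mem_append.1 hc with hc | hc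
      · exact List.mem_append.2 (.inl hc)
      · rcases hm c hc with hc | rfl
        · exact List.mem_append.2 (.inr hc)
        · exact (hr v (by simp) hvc).elim
    exact h.1 a (key a ha h1) b (key b hb h2) h1 h2 hne

open Classical in
theorem perf_reroot {A : V → V → Prop} (hA : ∀ a b, A a b → A b a) (l : List V) (hl : l.Nodup)
    (hp : Perf A l) : ∀ k : List V, k.Nodup → (∀ z ∈ k, z ∈ l) →
    (∀ a ∈ k, ∀ b ∈ k, a ≠ b → A a b) →
    ∃ r : List V, Perf A (r ++ k) ∧ (r ++ k).Nodup ∧ ∀ z, z ∈ r ++ k ↔ z ∈ l := by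
  induction l with
  | nil =>
    intro k hk hs hc
    have : k = [] := List.eq_nil_iff_forall_not_mem.2 fun z hz => by simpa using hs z hz
    subst this
    exact ⟨[], trivial, by simp, by simp⟩
  | cons t l ih =>
    intro k hk hs hc
    have htl : t ∉ l := (List.nodup_cons.1 hl).1
    have ih := ih (List.nodup_cons.1 hl).2 hp.2
    by_cases htk : t ∈ k
    · set C := l.filter (fun c => A t c ∧ c ∉ k) with hC
      set k0 := k.filter (fun c => c ≠ t) with hk0
      have mC : ∀ z, z ∈ C ↔ z ∈ l ∧ A t z ∧ z ∉ k := by intro z; simp [hC]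
      have mk0 : ∀ z, z ∈ k0 ↔ z ∈ k ∧ z ≠ t := by intro z; simp [hk0]
      have sub : ∀ z ∈ C ++ k0, z ∈ l ∧ A t z := by
        intro z hz
        rcases List.mem_append.1 hz with hz | hz
        · exact ⟨((mC z).1 hz).1, ((mC z).1 hz).2.1⟩
        · obtain ⟨h1, h2⟩ := (mk0 z).1 hz
          have := hs z h1
          simp only [List.mem_cons] at this
          exact ⟨this.resolve_left h2, hc t htk z h1 h2.symm⟩
      obtain ⟨r, h1, h2, h3⟩ := ih (C ++ k0) (by
          refine List.nodup_append.2 ⟨(List.nodup_cons.1 hl).2.filter _, hk.filter _, ?_⟩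
          rintro a ha b hb rfl
          exact ((mC a).1 ha).2.2 ((mk0 a).1 hb).1) (fun z hz => (sub z hz).1)
        (fun a ha b hb hne => hp.1 a (sub a ha).1 b (sub b hb).1 (sub a ha).2 (sub b hb).2 hne)
      have hrl : ∀ z ∈ r, z ∈ l := fun z hz => (h3 z).1 (List.mem_append.2 (.inl hz))
      have hdis : ∀ z ∈ r, z ∉ C ++ k0 := fun z hz hz' =>
        (List.nodup_append.1 h2).2.2 z hz z hz' rfl
      have mem' : ∀ z, z ∈ C ++ k ↔ z ∈ C ++ k0 ∨ z = t := by
        intro z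
        simp only [List.mem_append, mk0]
        by_cases hz : z = t
        · subst hz; simp [htk]
        · simp [hz]
      refine ⟨r ++ C, ?_, ?_, ?_⟩
      · rw [List.append_assoc]
        refine perf_replace r (C ++ k0) (C ++ k) t h1 (fun z hz => (mem' z).1 hz) ?_ ?_
        · intro v hv hvt
          apply hdis v hv
          by_cases hvk : v ∈ k
          · exact List.mem_append.2 (.inr ((mk0 v).2 ⟨hvk, fun h => htl (h ▸ hrl v hv)⟩))
          · exact List.mem_append.2 (.inl ((mC v).2 ⟨hrl v hv, hA _ _ hvt, hvk⟩))
        · apply perf_clique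
          intro a ha b hb hne
          rcases (mem' a).1 ha with ha | rfl
          · rcases (mem' b).1 hb with hb | rfl
            · exact hp.1 a (sub a ha).1 b (sub b hb).1 (sub a ha).2 (sub b hb).2 hne
            · exact hA _ _ (sub a ha).2
          · rcases (mem' b).1 hb with hb | rfl
            · exact (sub b hb).2
            · exact (hne rfl).elim
      · rw [List.append_assoc]
        refine List.nodup_append.2 ⟨(List.nodup_append.1 h2).1, ?_, ?_⟩
        · refine List.nodup_append.2 ⟨(List.nodup_cons.1 hl).2.filter _, hk, ?_⟩
          rintro a ha b hb rfl
          exact ((mC a).1 ha).2.2 hb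
        · rintro a ha b hb rfl
          rcases (mem' a).1 hb with hb | rfl
          · exact hdis a ha hb
          · exact htl (hrl a ha)
      · intro z
        rw [List.append_assoc, List.mem_append, mem', ← or_assoc, ← List.mem_append, h3 z,
          List.mem_cons, or_comm]
    · obtain ⟨r, h1, h2, h3⟩ := ih k hk (fun z hz => by
        have := hs z hz
        simp only [List.mem_cons] at this
        exact this.resolve_left (fun h => htk (h ▸ hz))) hc
      refine ⟨t :: r, ⟨fun a ha b hb => hp.1 a ((h3 a).1 ha) b ((h3 b).1 hb), h1⟩, ?_, ?_⟩
      · rw [List.cons_append]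
        exact List.nodup_cons.2 ⟨fun h => htl ((h3 t).1 h), h2⟩
      · intro z
        rw [List.cons_append, List.mem_cons, List.mem_cons, h3]

theorem perf_idx [DecidableEq V] {A : V → V → Prop} (l : List V) (hp : Perf A l) (v a b : V)
    (ha : a ∈ l) (hb : b ∈ l) (h1 : l.idxOf v < l.idxOf a) (h2 : l.idxOf v < l.idxOf b)
    (hva : A v a) (hvb : A v b) (hne : a ≠ b) : A a b := by
  induction l with
  | nil => simp at ha
  | cons t l ih =>
    have hat : a ≠ t := by rintro rfl; simp at h1
    have hbt : b ≠ t := by rintro rfl; simp at h2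
    have ha' : a ∈ l := by simpa [hat] using ha
    have hb' : b ∈ l := by simpa [hbt] using hb
    by_cases hvt : v = t
    · subst hvt
      exact hp.1 a ha' b hb' hva hvb hne
    · rw [List.idxOf_cons_ne _ (Ne.symm hvt), List.idxOf_cons_ne _ (Ne.symm hat)] at h1
      rw [List.idxOf_cons_ne _ (Ne.symm hvt), List.idxOf_cons_ne _ (Ne.symm hbt)] at h2
      exact ih hp.2 ha' hb' (by omega) (by omega)

/-- undirected part -/
def Und (D : Dag V) (a b : V) : Prop :=
  (D.edge a b ∧ ¬ Meek D a b) ∨ (D.edge b a ∧ ¬ Meek D b a)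

theorem Und.sy {D : Dag V} {a b : V} (h : D.Und a b) : D.Und b a := Or.symm h

theorem Und.spec {D : Dag V} {a b : V} (h : D.Und a b) :
    D.Adj a b ∧ ¬ Meek D a b ∧ ¬ Meek D b a := by
  rcases h with ⟨h, h'⟩ | ⟨h, h'⟩
  · exact ⟨.inl h, h', fun h2 => D.asy h h2.edge⟩
  · exact ⟨.inr h, fun h2 => D.asy h h2.edge, h'⟩

theorem und_iff {D : Dag V} {a b : V} : D.Und a b ↔
    D.Adj a b ∧ ¬ Meek D a b ∧ ¬ Meek D b a := by
  refine ⟨Und.spec, ?_⟩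
  rintro ⟨h | h, h1, h2⟩
  · exact .inl ⟨h, h1⟩
  · exact .inr ⟨h, h2⟩

theorem und_moral {D : Dag V} {a b v : V} (h1 : D.Und v a) (h2 : D.Und v b) (e1 : D.edge a v)
    (e2 : D.edge b v) (hne : a ≠ b) : D.Und a b := by
  obtain ⟨-, n1, n2⟩ := h1.spec
  obtain ⟨-, m1, m2⟩ := h2.spec
  refine und_iff.2 ⟨?_, ?_, ?_⟩
  · by_contra hn
    exact n2 (.vs e1 e2 hne hn)
  · intro h
    exact n2 (h.prop v (.inl e2) m2 m1)
  · intro h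
    exact m2 (h.prop v (.inl e1) n2 n1)

theorem und_perf [Finite V] (D : Dag V) (l : List V)
    (hl : l.Pairwise (fun a b => D.rk b ≤ D.rk a)) : Perf D.Und l := by
  induction l with
  | nil => trivial
  | cons v l ih =>
    rw [List.pairwise_cons] at hl
    refine ⟨fun a ha b hb h1 h2 hne => ?_, ih hl.2⟩
    have key : ∀ c ∈ l, D.Und v c → D.edge c v := by
      intro c hc h
      rcases h.spec.1 with h | h
      · have := D.rk_lt h
        have := hl.1 c hc
        omega
      · exact h
    exact und_moral h1 h2 (key a ha h1) (key b hb h2) hne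

open Classical in
theorem exists_perf [Fintype V] (D : Dag V) : ∃ l : List V, l.Nodup ∧ (∀ z, z ∈ l) ∧
    Perf D.Und l := by
  let R : V → V → Prop := fun a b => D.rk b ≤ D.rk a
  have : Std.Total R := ⟨fun a b => le_total _ _⟩
  have : IsTrans V R := ⟨fun a b c (h1 : _ ≤ _) (h2 : _ ≤ _) => h2.trans h1⟩
  refine ⟨(Finset.univ.toList : List V).insertionSort R, ?_, ?_, ?_⟩
  · exact (List.perm_insertionSort R _).nodup_iff.2 (Finset.nodup_toList _)
  · intro z
    rw [(List.perm_insertionSort R _).mem_iff]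
    simp
  · exact und_perf D _ (List.pairwise_insertionSort R _)

open Classical in
theorem exists_flip [Fintype V] (D : Dag V) {x y : V} (h : D.Und x y) :
    ∃ D' : Dag V, SkV D D' ∧ D'.edge x y := by
  obtain ⟨l, h1, h2, h3⟩ := exists_perf D
  have hxy : x ≠ y := h.spec.1.ne'
  obtain ⟨r, p1, p2, p3⟩ := perf_reroot (fun a b h => Und.sy h) l h1 h3 [y, x]
    (by simp [hxy.symm]) (fun z _ => h2 z) (by
      intro a ha b hb hne
      simp only [List.mem_cons, List.not_mem_nil, or_false] at ha hb
      rcases ha with rfl | rfl <;> rcases hb with rfl | rfl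
      · exact (hne rfl).elim
      · exact h.sy
      · exact h
      · exact (hne rfl).elim)
  set L := r ++ [y, x] with hL
  have mL : ∀ z, z ∈ L := fun z => (p3 z).2 (h2 z)
  let O : V → V → Prop := fun a b => D.Und a b ∧ L.idxOf b < L.idxOf a
  have hO : ∀ a b, D.Und a b → O a b ∨ O b a := by
    intro a b hab
    rcases lt_trichotomy (L.idxOf a) (L.idxOf b) with h | h | h
    · exact .inr ⟨hab.sy, h⟩
    · exact (hab.spec.1.ne' ((List.idxOf_inj (mL a)).1 h)).elim
    · exact .inl ⟨hab, h⟩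
  let E : V → V → Prop := fun a b => Meek D a b ∨ O a b
  -- acyclicity
  have step : ∀ a b c, Relation.TransGen (Meek D) a b → E b c →
      Relation.TransGen (Meek D) a c := by
    intro a b c hab hbc
    rcases hbc with hbc | hbc
    · exact hab.tail hbc
    · obtain ⟨n0, n1, n2⟩ := hbc.1.spec
      cases hab with
      | single h => exact .single (h.prop c n0 n1 n2)
      | tail h h' => exact h.tail (h'.prop c n0 n1 n2)
  have noM : ∀ a, ¬ Relation.TransGen (Meek D) a a := by
    intro a ha
    have : ∀ b, Relation.TransGen (Meek D) a b → D.rk a < D.rk b := by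
      intro b hb
      induction hb with
      | single h => exact D.rk_lt h.edge
      | tail _ h ih => exact ih.trans (D.rk_lt h.edge)
    exact lt_irrefl _ (this a ha)
  have path : ∀ a b, Relation.ReflTransGen E a b →
      (L.idxOf b ≤ L.idxOf a) ∨ ∃ c, Relation.ReflTransGen E a c ∧
        Relation.TransGen (Meek D) c b := by
    intro a b hab
    induction hab with
    | refl => exact .inl le_rfl
    | @tail b c hab hbc ih =>
      rcases ih with ih | ⟨d, hd, hd'⟩
      · rcases hbc with hbc | hbc
        · exact .inr ⟨b, hab, .single hbc⟩
        · exact .inl (hbc.2.le.trans ih)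
      · exact .inr ⟨d, hd, step _ _ _ hd' hbc⟩
  have steps : ∀ a b c, Relation.TransGen (Meek D) a b → Relation.ReflTransGen E b c →
      Relation.TransGen (Meek D) a c := by
    intro a b c hab hbc
    induction hbc with
    | refl => exact hab
    | tail _ h ih => exact step _ _ _ ih h
  have acyc : ∀ a b : V, E a b → ¬ Relation.ReflTransGen E b a := by
    intro a b hab hba
    rcases hab with hab | hab
    · exact noM a (steps _ _ _ (.single hab) hba)
    · rcases path b a hba with h | ⟨c, hc, hc'⟩
      · have := hab.2
        omega
      · exact noM c (steps _ _ _ hc' (.head (.inr hab) hc))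
  refine ⟨⟨E, acyc⟩, ⟨?_, ?_⟩, ?_⟩
  · intro a b
    constructor
    · intro hab
      by_cases m1 : Meek D a b
      · exact .inl (.inl m1)
      · by_cases m2 : Meek D b a
        · exact .inr (.inl m2)
        · rcases hO a b (und_iff.2 ⟨hab, m1, m2⟩) with h | h
          · exact .inl (.inr h)
          · exact .inr (.inr h)
    · rintro ((h | h) | (h | h))
      · exact .inl h.edge
      · exact h.1.spec.1
      · exact .inr h.edge
      · exact h.1.spec.1.sy
  · intro a b c hac hn
    constructor
    · rintro ⟨e1, e2⟩
      exact ⟨.inl (.vs e1 e2 hac hn), .inl (.vs e2 e1 hac.symm (fun h => hn h.sy))⟩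
    · rintro ⟨e1 | e1, e2 | e2⟩
      · exact ⟨e1.edge, e2.edge⟩
      · obtain ⟨n0, n1, n2⟩ := e2.1.spec
        exact (hn (.inl (e1.prop c n0.sy n2 n1).edge)).elim
      · obtain ⟨n0, n1, n2⟩ := e1.1.spec
        exact (hn (.inr (e2.prop a n0.sy n2 n1).edge)).elim
      · exact (hn (perf_idx L p1 b a c (mL a) (mL c) e1.2 e2.2 e1.1.sy e2.1.sy hac).spec.1).elim
  · refine .inr ⟨h, ?_⟩
    have hy : y ∉ r := fun hy => (List.nodup_append.1 p2).2.2 y hy y (by simp) rfl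
    have hx : x ∉ r := fun hy => (List.nodup_append.1 p2).2.2 x hy x (by simp) rfl
    rw [hL, List.idxOf_append_of_notMem hy, List.idxOf_append_of_notMem hx]
    simp [List.idxOf_cons_ne _ hxy.symm]

end Dag

namespace Dag

/-- some descendant of `b` lies in `S` -/
def AnS (D : Dag V) (S : Set V) (b : V) : Prop := ∃ d, D.Anc b d ∧ d ∈ S

theorem AnS.of_edge {D : Dag V} {S : Set V} {a b : V} (h : D.edge a b) (hb : D.AnS S b) :
    D.AnS S a := by
  obtain ⟨d, h1, h2⟩ := hb
  exact ⟨d, Relation.ReflTransGen.head h h1, h2⟩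

/-- the triple `a, b, c` is open at `b` -/
def Op (D : Dag V) (S : Set V) (a b c : V) : Prop :=
  ((D.edge a b ∧ D.edge c b) → D.AnS S b) ∧ (¬ (D.edge a b ∧ D.edge c b) → b ∉ S)

/-- open walks -/
def Wk (D : Dag V) (S : Set V) (x y : V) (n : ℕ) (f : ℕ → V) : Prop :=
  f 0 = x ∧ f n = y ∧ (∀ i < n, D.Adj (f i) (f (i + 1))) ∧
    ∀ i, i + 1 < n → D.Op S (f i) (f (i + 1)) (f (i + 2))

theorem exists_wk_of_not_dSep {D : Dag V} {S : Set V} {x y : V} (h : ¬ D.dSep x y S) :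
    ∃ n f, D.Wk S x y n f := by
  unfold dSep at h
  push Not at h
  obtain ⟨p, hp⟩ := h
  obtain ⟨n, f, inj, first, last, adj⟩ := p
  let g : ℕ → V := fun i => if h : i < n + 1 then f ⟨i, h⟩ else x
  have hg : ∀ i (h : i < n + 1), g i = f ⟨i, h⟩ := fun i h => dif_pos h
  refine ⟨n, g, ?_, ?_, ?_, ?_⟩
  · rw [hg 0 (by omega)]; exact first
  · rw [hg n (by omega)]; exact last
  · intro i hi
    rw [hg i (by omega), hg (i + 1) (by omega)]
    exact adj ⟨i, hi⟩
  · intro i hi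
    rw [hg i (by omega), hg (i + 1) (by omega), hg (i + 2) (by omega)]
    constructor
    · intro hc
      by_contra hn
      exact hp ⟨i + 1, by omega, hi, .inr ⟨⟨by omega, hi, hc⟩, fun d h1 h2 => hn ⟨d, h1, h2⟩⟩⟩
    · intro hc hS
      refine hp ⟨i + 1, by omega, hi, .inl ⟨?_, hS⟩⟩
      rintro ⟨_, _, h3⟩
      exact hc h3

theorem not_dSep_of_wk_inj {D : Dag V} {S : Set V} {x y : V} {n : ℕ} {f : ℕ → V}
    (h : D.Wk S x y n f) (hinj : ∀ i j, i < j → j ≤ n → f i ≠ f j) : ¬ D.dSep x y S := by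
  obtain ⟨h0, hn, ha, ho⟩ := h
  intro hd
  obtain ⟨i, hi0, hin, hb⟩ := hd ⟨n, fun i => f i.1, by
    intro a b hab
    rcases lt_trichotomy a.1 b.1 with h | h | h
    · exact (hinj _ _ h (by omega) hab).elim
    · exact Fin.ext h
    · exact (hinj _ _ h (by omega) hab.symm).elim, h0, hn, fun i => ha i.1 i.2⟩
  obtain ⟨j, rfl⟩ : ∃ j, i = j + 1 := ⟨i - 1, by omega⟩
  have ho := ho j hin
  rcases hb with ⟨h1, h2⟩ | ⟨⟨_, _, h1⟩, h2⟩
  · refine ho.2 (fun hc => h1 ⟨hi0, hin, hc⟩) h2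
  · obtain ⟨d, hd1, hd2⟩ := ho.1 h1
    exact h2 d hd1 hd2

theorem wk_splice {D : Dag V} {S : Set V} {x y : V} {n : ℕ} {f : ℕ → V}
    (h : D.Wk S x y n f) {i j : ℕ} (hij : i < j) (hj : j ≤ n) (he : f i = f j) :
    ∃ g, D.Wk S x y (n - (j - i)) g := by
  obtain ⟨h0, hn, ha, ho⟩ := h
  have hlo : ∀ g : ℕ → V, g = (fun k => if k ≤ i then f k else f (k + (j - i))) →
      (∀ k ≤ i, g k = f k) ∧ (∀ k, i ≤ k → g k = f (k + (j - i))) := by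
    rintro g rfl
    refine ⟨fun k hk => if_pos hk, fun k hk => ?_⟩
    by_cases hki : k = i
    · subst hki
      simp only [le_refl, if_true]
      rw [he]; congr 1; omega
    · exact if_neg (by omega)
  obtain ⟨g, hg⟩ : ∃ g : ℕ → V, g = (fun k => if k ≤ i then f k else f (k + (j - i))) := ⟨_, rfl⟩
  obtain ⟨hl, hr⟩ := hlo g hg
  refine ⟨g, ?_, ?_, ?_, ?_⟩
  · rw [hl 0 (by omega), h0]
  · rw [hr _ (by omega), ← hn]; congr 1; omega
  · intro k hk
    by_cases hki : k + 1 ≤ i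
    · rw [hl k (by omega), hl (k + 1) hki]
      exact ha k (by omega)
    · rw [hr k (by omega), hr (k + 1) (by omega), show k + 1 + (j - i) = k + (j - i) + 1 by omega]
      exact ha _ (by omega)
  · intro k hk
    by_cases hki : k + 2 ≤ i
    · rw [hl k (by omega), hl (k + 1) (by omega), hl (k + 2) hki]
      exact ho k (by omega)
    · by_cases hki2 : i ≤ k
      · rw [hr k (by omega), hr (k + 1) (by omega), hr (k + 2) (by omega),
          show k + 1 + (j - i) = k + (j - i) + 1 by omega,
          show k + 2 + (j - i) = k + (j - i) + 2 by omega]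
        exact ho _ (by omega)
      · have hk1 : i = k + 1 := by omega
        subst hk1
        rw [hl k (by omega), hl (k + 1) le_rfl, hr (k + 2) (by omega)]
        obtain ⟨m, rfl⟩ : ∃ m, j = m + 1 := ⟨j - 1, by omega⟩
        rw [show k + 2 + (m + 1 - (k + 1)) = m + 2 by omega]
        have o1 := ho k (by omega)
        have o2 := ho m (by omega)
        rw [← he] at o2
        have a2 := ha m (by omega)
        rw [← he] at a2
        have a1 := ha (k + 1) (by omega)
        constructor
        · rintro ⟨c1, c2⟩
          by_cases d1 : D.edge (f (k + 2)) (f (k + 1))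
          · exact o1.1 ⟨c1, d1⟩
          by_cases d2 : D.edge (f m) (f (k + 1))
          · exact o2.1 ⟨d2, c2⟩
          have e1 : D.edge (f (k + 1)) (f (k + 2)) := a1.resolve_right d1
          by_contra hS
          have key : ∀ q, k + 1 + q < m + 1 → D.edge (f (k + 1 + q)) (f (k + 1 + q + 1)) ∧
              D.Anc (f (k + 1)) (f (k + 1 + q)) := by
            intro q
            induction q with
            | zero => exact fun _ => ⟨e1, .refl⟩
            | succ q ih =>
              intro hq
              obtain ⟨i1, i2⟩ := ih (by omega)
              have i3 : D.Anc (f (k + 1)) (f (k + 1 + q + 1)) := i2.tail i1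
              refine ⟨?_, i3⟩
              rcases ha (k + 1 + q + 1) (by omega) with h | h
              · exact h
              · obtain ⟨d, hd1, hd2⟩ := (ho (k + 1 + q) (by omega)).1 ⟨i1, h⟩
                exact (hS ⟨d, i3.trans hd1, hd2⟩).elim
          have := (key (m - (k + 1)) (by omega)).1
          rw [show k + 1 + (m - (k + 1)) = m by omega, ← he] at this
          exact d2 this
        · intro hc hS
          by_cases c1 : D.edge (f k) (f (k + 1))
          · have c2 : ¬ D.edge (f (m + 2)) (f (k + 1)) := fun h => hc ⟨c1, h⟩
            exact o2.2 (fun h => c2 h.2) hS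
          · exact o1.2 (fun h => c1 h.1) hS

theorem not_dSep_iff {D : Dag V} {S : Set V} {x y : V} :
    ¬ D.dSep x y S ↔ ∃ n f, D.Wk S x y n f := by
  refine ⟨exists_wk_of_not_dSep, ?_⟩
  rintro ⟨n, hn⟩
  induction n using Nat.strong_induction_on with
  | _ n ih =>
    obtain ⟨f, hf⟩ := hn
    by_cases hinj : ∀ i j, i < j → j ≤ n → f i ≠ f j
    · exact not_dSep_of_wk_inj hf hinj
    · push Not at hinj
      obtain ⟨i, j, hij, hj, he⟩ := hinj
      exact ih _ (by omega) (wk_splice hf hij hj he)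

theorem wk_triple {D : Dag V} {S : Set V} {a b c : V} (h1 : D.Adj a b) (h2 : D.Adj b c)
    (h : D.Op S a b c) : ¬ D.dSep a c S := by
  rw [not_dSep_iff]
  refine ⟨2, fun i => if i = 0 then a else if i = 1 then b else c, rfl, rfl, ?_, ?_⟩
  · intro i hi
    interval_cases i
    · exact h1
    · exact h2
  · intro i hi
    obtain rfl : i = 0 := by omega
    exact h

theorem not_dSep_of_adj {D : Dag V} {x y : V} (S : Set V) (h : D.Adj x y) : ¬ D.dSep x y S := by
  rw [not_dSep_iff]
  refine ⟨1, fun i => if i = 0 then x else y, rfl, rfl, ?_, ?_⟩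
  · intro i hi
    obtain rfl : i = 0 := by omega
    exact h
  · intro i hi
    omega

theorem exists_sep [Finite V] (D : Dag V) {x y : V} (hne : x ≠ y) (hn : ¬ D.Adj x y) :
    ∃ S, D.dSep x y S := by
  refine ⟨{v | (D.Anc v x ∨ D.Anc v y) ∧ v ≠ x ∧ v ≠ y}, ?_⟩
  set S : Set V := {v | (D.Anc v x ∨ D.Anc v y) ∧ v ≠ x ∧ v ≠ y} with hS
  by_contra hd
  -- obtain a shortest open walk
  have hd' := not_dSep_iff.1 hd
  classical
  obtain ⟨f, hf⟩ := Nat.find_spec hd'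
  set n := Nat.find hd' with hndef
  have hinj : ∀ i j, i < j → j ≤ n → f i ≠ f j := by
    intro i j hij hj he
    exact Nat.find_min hd' (m := n - (j - i)) (by omega) (wk_splice hf hij hj he)
  obtain ⟨h0, hn', ha, ho⟩ := hf
  have hn2 : 2 ≤ n := by
    by_contra hlt
    have : n = 0 ∨ n = 1 := by omega
    rcases this with h | h
    · rw [h] at hn'; exact hne (h0.symm.trans hn')
    · rw [h] at hn' ha
      have := ha 0 (by omega)
      rw [h0, hn'] at this
      exact hn this
  have allAn : ∀ m i, i ≤ n → Set.ncard {v : V | D.rk (f i) < D.rk v} = m →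
      D.Anc (f i) x ∨ D.Anc (f i) y := by
    intro m
    induction m using Nat.strong_induction_on with
    | _ m ih =>
      intro i hi hm
      have next : ∀ k ≤ n, D.edge (f i) (f k) → D.Anc (f i) x ∨ D.Anc (f i) y := by
        intro k hk hik
        have hlt := D.rk_lt hik
        have : D.Anc (f k) x ∨ D.Anc (f k) y := by
          refine ih _ ?_ k hk rfl
          rw [← hm]
          refine Set.ncard_lt_ncard ⟨fun v hv => lt_trans hlt hv, fun hs => ?_⟩ (Set.toFinite _)
          have hk' : f k ∈ {v : V | D.rk (f k) < D.rk v} := hs hlt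
          exact lt_irrefl (D.rk (f k)) hk'
        exact this.imp (fun h => .head hik h) (fun h => .head hik h)
      by_cases hi0 : i = 0
      · subst hi0; rw [h0]; exact .inl .refl
      by_cases hin : i = n
      · rw [hin, hn']; exact .inr .refl
      obtain ⟨j, rfl⟩ : ∃ j, i = j + 1 := ⟨i - 1, by omega⟩
      have o := ho j (by omega)
      by_cases hc : D.edge (f j) (f (j + 1)) ∧ D.edge (f (j + 2)) (f (j + 1))
      · obtain ⟨d, h1, h2⟩ := o.1 hc
        exact h2.1.imp (fun h => Relation.ReflTransGen.trans h1 h)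
          (fun h => Relation.ReflTransGen.trans h1 h)
      · rcases ha j (by omega) with h | h
        · rcases ha (j + 1) (by omega) with h' | h'
          · exact next (j + 2) (by omega) h'
          · exact (hc ⟨h, h'⟩).elim
        · exact next j (by omega) h
  have coll : ∀ j, j + 1 < n → D.edge (f j) (f (j + 1)) ∧ D.edge (f (j + 2)) (f (j + 1)) := by
    intro j hj
    by_contra hc
    refine (ho j hj).2 hc ⟨allAn _ (j + 1) (by omega) rfl, ?_, ?_⟩
    · rw [← h0]; exact (hinj 0 (j + 1) (by omega) (by omega)).symm
    · rw [← hn']; exact hinj (j + 1) n (by omega) (by omega)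
  by_cases h3 : 2 < n
  · exact D.asy (coll 0 (by omega)).2 (coll 1 (by omega)).1
  · have : n = 2 := by omega
    rw [this] at hn'
    obtain ⟨c1, c2⟩ := coll 0 (by omega)
    simp only [Nat.zero_add] at c1 c2
    rcases allAn _ 1 (by omega) rfl with h | h
    · rw [h0] at c1; exact D.acyclic _ _ c1 h
    · rw [hn'] at c2; exact D.acyclic _ _ c2 h

theorem adj_of_mequiv [Finite V] {D D' : Dag V} (h : D.MEquiv D') {a b : V} (hab : D.Adj a b) :
    D'.Adj a b := by
  by_contra hn
  obtain ⟨S, hS⟩ := D'.exists_sep hab.ne' hn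
  exact not_dSep_of_adj S hab ((h a b S).2 hS)

theorem MEquiv.sy {D D' : Dag V} (h : D.MEquiv D') : D'.MEquiv D := fun x y S => (h x y S).symm

theorem vstr_of_mequiv [Finite V] {D D' : Dag V} (h : D.MEquiv D') {a b c : V} (hne : a ≠ c)
    (hn : ¬ D.Adj a c) (h1 : D.edge a b) (h2 : D.edge c b) : D'.edge a b ∧ D'.edge c b := by
  by_contra hc
  obtain ⟨S, hS⟩ := D'.exists_sep hne (fun h' => hn (adj_of_mequiv h.sy h'))
  have hb : b ∈ S := by
    by_contra hb
    exact wk_triple (adj_of_mequiv h (.inl h1)) (adj_of_mequiv h (.inr h2))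
      ⟨fun h => (hc h).elim, fun _ => hb⟩ hS
  exact wk_triple (.inl h1) (.inr h2) ⟨fun _ => ⟨b, .refl, hb⟩, fun h => (h ⟨h1, h2⟩).elim⟩
    ((h a c S).2 hS)

theorem skV_of_mequiv [Finite V] {D D' : Dag V} (h : D.MEquiv D') : SkV D D' := by
  refine ⟨fun a b => ⟨adj_of_mequiv h, adj_of_mequiv h.sy⟩, fun a b c hne hn => ⟨?_, ?_⟩⟩
  · exact fun ⟨h1, h2⟩ => vstr_of_mequiv h hne hn h1 h2
  · exact fun ⟨h1, h2⟩ => vstr_of_mequiv h.sy hne (fun h' => hn (adj_of_mequiv h.sy h')) h1 h2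

end Dag

namespace Dag

/-- `Lv true a`: an open walk from `x` may leave `a` towards a child;
`Lv false a`: it may leave `a` towards a parent. -/
inductive Lv (D : Dag V) (S : Set V) (x : V) : Bool → V → Prop
  | start (k : Bool) : Lv D S x k x
  | c1 {s a : V} : Lv D S x true s → D.edge s a → a ∉ S → Lv D S x true a
  | c2 {s a : V} : Lv D S x true s → D.edge s a → D.AnS S a → Lv D S x false a
  | c3 {t a : V} (k : Bool) : Lv D S x false t → D.edge a t → a ∉ S → Lv D S x k a

def Cn' (D : Dag V) (S : Set V) (x y : V) : Prop :=
  x = y ∨ (∃ s, D.Lv S x true s ∧ D.edge s y) ∨ (∃ t, D.Lv S x false t ∧ D.edge y t)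

theorem Cn'.lv {D : Dag V} {S : Set V} {x y : V} (h : D.Cn' S x y) (hy : y ∉ S) :
    D.Lv S x true y := by
  rcases h with rfl | ⟨s, h1, h2⟩ | ⟨s, h1, h2⟩
  · exact .start _
  · exact .c1 h1 h2 hy
  · exact .c3 _ h1 h2 hy

theorem cn_of_wk {D : Dag V} {S : Set V} {x y : V} {n : ℕ} {f : ℕ → V} (h : D.Wk S x y n f) :
    D.Cn' S x y := by
  obtain ⟨h0, hn, ha, ho⟩ := h
  have key : ∀ i < n, (D.edge (f i) (f (i + 1)) → D.Lv S x true (f i)) ∧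
      (D.edge (f (i + 1)) (f i) → D.Lv S x false (f i)) := by
    intro i
    induction i with
    | zero => intro _; rw [h0]; exact ⟨fun _ => .start _, fun _ => .start _⟩
    | succ i ih =>
      intro hi
      have ih := ih (by omega)
      have o := ho i hi
      rcases ha i (by omega) with e | e
      · refine ⟨fun h => .c1 (ih.1 e) e (o.2 fun h' => D.asy h h'.2), fun h => ?_⟩
        exact .c2 (ih.1 e) e (o.1 ⟨e, h⟩)
      · have := o.2 fun h' => D.asy e h'.1
        exact ⟨fun h => .c3 _ (ih.2 e) e this, fun h => .c3 _ (ih.2 e) e this⟩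
  rcases Nat.eq_zero_or_pos n with rfl | hpos
  · exact .inl (h0.symm.trans hn)
  · obtain ⟨m, rfl⟩ : ∃ m, n = m + 1 := ⟨n - 1, by omega⟩
    have k := key m (by omega)
    rcases ha m (by omega) with e | e
    · exact .inr (.inl ⟨f m, k.1 e, hn ▸ e⟩)
    · exact .inr (.inr ⟨f m, k.2 e, hn ▸ e⟩)

/-- walk ending at `a`, that may be continued by `b` -/
def WkE (D : Dag V) (S : Set V) (x a b : V) : Prop :=
  ∃ n f, D.Wk S x a n f ∧ ∀ m, n = m + 1 → D.Op S (f m) a b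

theorem WkE.ext {D : Dag V} {S : Set V} {x a b : V} (h : D.WkE S x a b) (hab : D.Adj a b) :
    ∃ n f, D.Wk S x b (n + 1) f ∧ f n = a := by
  obtain ⟨n, f, ⟨h0, hn, ha, ho⟩, he⟩ := h
  have hg : ∀ i ≤ n, (Function.update f (n + 1) b) i = f i := fun i hi =>
    Function.update_of_ne (by omega) _ _
  have hg' : (Function.update f (n + 1) b) (n + 1) = b := Function.update_self _ _ _
  refine ⟨n, Function.update f (n + 1) b, ⟨?_, hg', ?_, ?_⟩, ?_⟩
  · rw [hg 0 (by omega), h0]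
  · intro i hi
    rw [hg i (by omega)]
    by_cases hin : i = n
    · subst hin
      rw [hg', hn]; exact hab
    · rw [hg (i + 1) (by omega)]; exact ha i (by omega)
  · intro i hi
    rw [hg i (by omega), hg (i + 1) (by omega)]
    by_cases hin : i + 1 = n
    · subst hin
      rw [hg', hn]; exact he i rfl
    · rw [hg (i + 2) (by omega)]; exact ho i (by omega)
  · rw [hg n le_rfl, hn]

theorem Lv.wkE {D : Dag V} {S : Set V} {x : V} {k : Bool} {a : V} (h : D.Lv S x k a) :
    ∀ b, (if k then D.edge a b else D.edge b a) → D.WkE S x a b := by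
  induction h with
  | start k =>
    intro b _
    exact ⟨0, fun _ => x, ⟨rfl, rfl, fun i hi => by omega, fun i hi => by omega⟩,
      fun m hm => by omega⟩
  | @c1 s a h1 h2 h3 ih =>
    intro b hb
    obtain ⟨n, f, hf, hfn⟩ := (ih a (by simpa using h2)).ext (.inl h2)
    refine ⟨n + 1, f, hf, fun m hm => ?_⟩
    obtain rfl : n = m := by omega
    refine ⟨fun hc => ?_, fun _ => h3⟩
    exact (D.asy (by simpa using hb) hc.2).elim
  | @c2 s a h1 h2 h3 ih =>
    intro b hb
    obtain ⟨n, f, hf, hfn⟩ := (ih a (by simpa using h2)).ext (.inl h2)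
    refine ⟨n + 1, f, hf, fun m hm => ?_⟩
    obtain rfl : n = m := by omega
    refine ⟨fun hc => h3, fun hc => ?_⟩
    rw [hfn] at hc
    exact (hc ⟨h2, by simpa using hb⟩).elim
  | @c3 t a k h1 h2 h3 ih =>
    intro b hb
    obtain ⟨n, f, hf, hfn⟩ := (ih a (by simpa using h2)).ext (.inr h2)
    refine ⟨n + 1, f, hf, fun m hm => ?_⟩
    obtain rfl : n = m := by omega
    refine ⟨fun hc => ?_, fun _ => h3⟩
    rw [hfn] at hc
    exact (D.asy h2 hc.1).elim

theorem not_dSep_iff_cn {D : Dag V} {S : Set V} {x y : V} : ¬ D.dSep x y S ↔ D.Cn' S x y := by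
  rw [not_dSep_iff]
  constructor
  · rintro ⟨n, f, h⟩
    exact cn_of_wk h
  · rintro (rfl | ⟨s, h1, h2⟩ | ⟨s, h1, h2⟩)
    · exact ⟨0, fun _ => x, rfl, rfl, fun i hi => by omega, fun i hi => by omega⟩
    · obtain ⟨n, f, hf, _⟩ := (h1.wkE y (by simpa using h2)).ext (.inl h2)
      exact ⟨_, _, hf⟩
    · obtain ⟨n, f, hf, _⟩ := (h1.wkE y (by simpa using h2)).ext (.inr h2)
      exact ⟨_, _, hf⟩

/-- `D'` is obtained from `D` by reversing the covered edge `u → v` -/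
structure CovRev (D D' : Dag V) (u v : V) : Prop where
  uv : D.edge u v
  cov : ∀ p, D.edge p v ↔ D.edge p u ∨ p = u
  rev : ∀ a b, D'.edge a b ↔ (D.edge a b ∧ ¬ (a = u ∧ b = v)) ∨ (a = v ∧ b = u)

namespace CovRev

variable {D D' : Dag V} {u v : V}

theorem ne (h : CovRev D D' u v) : u ≠ v := by
  have := Adj.ne' (.inl h.uv : D.Adj u v)
  exact this

theorem pu (h : CovRev D D' u v) {p : V} (hp : D.edge p u) : D'.edge p u :=
  (h.rev _ _).2 (.inl ⟨hp, fun h' => h.ne h'.2⟩)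

theorem pv (h : CovRev D D' u v) {p : V} (hp : D.edge p u) : D'.edge p v :=
  (h.rev _ _).2 (.inl ⟨(h.cov p).2 (.inl hp), fun h' => D.irr u (h'.1 ▸ hp)⟩)

theorem vu (h : CovRev D D' u v) : D'.edge v u := (h.rev _ _).2 (.inr ⟨rfl, rfl⟩)

theorem oth (h : CovRev D D' u v) {a b : V} (hab : D.edge a b) (hn : ¬ (a = u ∧ b = v)) :
    D'.edge a b := (h.rev _ _).2 (.inl ⟨hab, hn⟩)

theorem symm (h : CovRev D D' u v) : CovRev D' D v u := by
  refine ⟨h.vu, fun p => ?_, fun a b => ?_⟩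
  · rw [h.rev, h.rev, h.cov]
    have h1 := h.ne
    have h2 : ¬ D.edge u u := D.irr u
    have h3 : ¬ D.edge v u := D.asy h.uv
    by_cases hpu : p = u
    · subst hpu; simp [h1, h2]
    · by_cases hpv : p = v
      · subst hpv; simp [h1.symm]
      · simp [hpu, hpv]
  · rw [h.rev]
    have h1 := h.ne
    have h2 := h.uv
    have h3 : ¬ D.edge v u := D.asy h.uv
    by_cases hc : a = u ∧ b = v
    · obtain ⟨rfl, rfl⟩ := hc; simp [h2]
    · by_cases hc' : a = v ∧ b = u
      · obtain ⟨rfl, rfl⟩ := hc'; simp [h1.symm, h3]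
      · simp only [hc, hc']; simp

theorem skV (h : CovRev D D' u v) : SkV D D' := by
  have adj : ∀ {D D' : Dag V} {u v : V}, CovRev D D' u v → ∀ a b, D.edge a b → D'.Adj a b := by
    intro D D' u v h a b hab
    by_cases hc : a = u ∧ b = v
    · obtain ⟨rfl, rfl⟩ := hc; exact .inr h.vu
    · exact .inl (h.oth hab hc)
  have adj' : ∀ {D D' : Dag V} {u v : V}, CovRev D D' u v → ∀ a b, D.Adj a b → D'.Adj a b := by
    intro D D' u v h a b hab
    rcases hab with hab | hab
    · exact adj h a b hab
    · exact (adj h b a hab).sy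
  have vst : ∀ {D D' : Dag V} {u v : V}, CovRev D D' u v → ∀ a b c, a ≠ c → ¬ D.Adj a c →
      D.edge a b → D.edge c b → D'.edge a b := by
    intro D D' u v h a b c hne hn h1 h2
    refine h.oth h1 ?_
    rintro ⟨rfl, rfl⟩
    rcases (h.cov c).1 h2 with h3 | h3
    · exact hn (.inr h3)
    · exact hne h3.symm
  refine ⟨fun a b => ⟨adj' h a b, adj' h.symm a b⟩, fun a b c hne hn => ⟨?_, ?_⟩⟩
  · rintro ⟨h1, h2⟩
    exact ⟨vst h a b c hne hn h1 h2, vst h c b a hne.symm (fun h => hn h.sy) h2 h1⟩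
  · have hn' : ¬ D'.Adj a c := fun h' => hn (adj' h.symm a c h')
    rintro ⟨h1, h2⟩
    exact ⟨vst h.symm a b c hne hn' h1 h2, vst h.symm c b a hne.symm (fun h => hn' h.sy) h2 h1⟩

theorem anS (h : CovRev D D' u v) {S : Set V} {w : V} (hw : D.AnS S w) :
    D'.AnS S w ∨ (w = u ∧ D'.AnS S v) := by
  obtain ⟨d, h1, h2⟩ := hw
  induction h1 using Relation.ReflTransGen.head_induction_on with
  | refl => exact .inl ⟨d, .refl, h2⟩
  | @head a c hac _ ih =>
    rcases ih with ih | ⟨rfl, ih⟩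
    · by_cases hc : a = u ∧ c = v
      · obtain ⟨rfl, rfl⟩ := hc; exact .inr ⟨rfl, ih⟩
      · exact .inl (ih.of_edge (h.oth hac hc))
    · exact .inl (ih.of_edge (h.pv hac))

theorem sim (h : CovRev D D' u v) {S : Set V} {x : V} {k : Bool} {a : V} (hl : D.Lv S x k a) :
    (a ≠ u → a ≠ v → D'.Lv S x k a) ∧
    (a = v → k = true → D'.Lv S x true v) ∧
    (a = v → k = false → (D'.Lv S x false u ∨ D'.Lv S x false v) ∧ D'.Cn' S x u ∧ D'.Cn' S x v) ∧
    (a = u → k = true → D'.Lv S x true u ∧ D'.Cn' S x u ∧ D'.Cn' S x v ∧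
      (D.AnS S v → D'.Lv S x false u ∨ D'.Lv S x false v)) ∧
    (a = u → k = false → D'.Lv S x false u ∨ D'.Lv S x false v) := by
  have huv := h.ne
  have anv : D.AnS S v → D'.AnS S v := fun hv => by
    rcases h.anS hv with h' | h'
    · exact h'
    · exact h'.2
  induction hl with
  | start k =>
    refine ⟨fun _ _ => .start _, ?_, ?_, ?_, ?_⟩
    · rintro rfl rfl; exact .start _
    · rintro rfl rfl
      exact ⟨.inr (.start _), .inr (.inl ⟨_, .start _, h.vu⟩), .inl rfl⟩
    · rintro rfl rfl
      exact ⟨.start _, .inl rfl, .inr (.inr ⟨_, .start _, h.vu⟩), fun _ => .inl (.start _)⟩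
    · rintro rfl rfl; exact .inl (.start _)
  | @c1 s a h1 h2 h3 ih =>
    obtain ⟨i1, i2, -, i4, -⟩ := ih
    have lt : ∀ s', s' = s → s' ≠ u → D'.Lv S x true s' := by
      rintro s' rfl hs
      by_cases hv : s' = v
      · subst hv; exact i2 rfl rfl
      · exact i1 hs hv
    refine ⟨?_, ?_, by simp, ?_, by simp⟩
    · intro a1 a2
      have hl : D'.Lv S x true s := by
        by_cases hs : s = u
        · rw [hs]; exact (i4 hs rfl).1
        · exact lt s rfl hs
      exact .c1 hl (h.oth h2 fun h' => a2 h'.2) h3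
    · rintro rfl -
      by_cases hs : s = u
      · exact (i4 hs rfl).2.2.1.lv h3
      · exact .c1 (lt s rfl hs) (h.oth h2 fun h' => hs h'.1) h3
    · rintro rfl -
      have hs : s ≠ a := fun hs => D.irr _ (hs ▸ h2)
      have hl := lt s rfl hs
      refine ⟨.c1 hl (h.pu h2) h3, .inr (.inl ⟨s, hl, h.pu h2⟩), .inr (.inl ⟨s, hl, h.pv h2⟩), ?_⟩
      intro hv
      exact .inr (.c2 hl (h.pv h2) (anv hv))
  | @c2 s a h1 h2 h3 ih =>
    obtain ⟨i1, i2, -, i4, -⟩ := ih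
    have lt : ∀ s', s' = s → s' ≠ u → D'.Lv S x true s' := by
      rintro s' rfl hs
      by_cases hv : s' = v
      · subst hv; exact i2 rfl rfl
      · exact i1 hs hv
    refine ⟨?_, by simp, ?_, by simp, ?_⟩
    · intro a1 a2
      have hl : D'.Lv S x true s := by
        by_cases hs : s = u
        · rw [hs]; exact (i4 hs rfl).1
        · exact lt s rfl hs
      have : D'.AnS S a := (h.anS h3).resolve_right fun h' => a1 h'.1
      exact .c2 hl (h.oth h2 fun h' => a2 h'.2) this
    · rintro rfl -
      by_cases hs : s = u
      · obtain ⟨-, j2, j3, j4⟩ := i4 hs rfl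
        exact ⟨j4 h3, j2, j3⟩
      · have hsu : D.edge s u := ((h.cov s).1 h2).resolve_right hs
        have hl := lt s rfl hs
        exact ⟨.inr (.c2 hl (h.pv hsu) (anv h3)), .inr (.inl ⟨s, hl, h.pu hsu⟩),
          .inr (.inl ⟨s, hl, h.pv hsu⟩)⟩
    · rintro rfl -
      have hs : s ≠ a := fun hs => D.irr _ (hs ▸ h2)
      have hl := lt s rfl hs
      rcases h.anS h3 with h4 | h4
      · exact .inl (.c2 hl (h.pu h2) h4)
      · exact .inr (.c2 hl (h.pv h2) h4.2)
  | @c3 t a k h1 h2 h3 ih =>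
    obtain ⟨i1, -, i3, -, i5⟩ := ih
    refine ⟨?_, ?_, ?_, ?_, ?_⟩
    · intro a1 a2
      by_cases htu : t = u
      · subst htu
        rcases i5 rfl rfl with h' | h'
        · exact .c3 _ h' (h.pu h2) h3
        · exact .c3 _ h' (h.pv h2) h3
      · by_cases htv : t = v
        · subst htv
          have hau : D.edge a u := ((h.cov a).1 h2).resolve_right a1
          rcases (i3 rfl rfl).1 with h' | h'
          · exact .c3 _ h' (h.pu hau) h3
          · exact .c3 _ h' (h.pv hau) h3
        · exact .c3 _ (i1 htu htv) (h.oth h2 fun h' => a1 h'.1) h3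
    all_goals rintro rfl rfl
    · have htv : t ≠ a := fun hs => D.irr _ (hs ▸ h2)
      have htu : t ≠ u := fun hs => D.asy h.uv (hs ▸ h2)
      exact .c3 _ (i1 htu htv) (h.oth h2 fun h' => htv h'.2) h3
    · have htv : t ≠ a := fun hs => D.irr _ (hs ▸ h2)
      have htu : t ≠ u := fun hs => D.asy h.uv (hs ▸ h2)
      have e := h.oth h2 fun h' => htv h'.2
      have l : ∀ k, D'.Lv S x k a := fun k => .c3 k (i1 htu htv) e h3
      exact ⟨.inr (l _), .inr (.inl ⟨a, l _, h.vu⟩), .inr (.inr ⟨t, i1 htu htv, e⟩)⟩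
    · have htu : t ≠ a := fun hs => D.irr _ (hs ▸ h2)
      by_cases htv : t = v
      · obtain ⟨j1, j2, j3⟩ := i3 htv rfl
        exact ⟨j2.lv h3, j2, j3, fun _ => j1⟩
      · have e := h.oth h2 fun h' => htv h'.2
        have l : ∀ k, D'.Lv S x k a := fun k => .c3 k (i1 htu htv) e h3
        exact ⟨l _, .inr (.inr ⟨t, i1 htu htv, e⟩), .inr (.inr ⟨a, l _, h.vu⟩), fun _ => .inl (l _)⟩
    · have htu : t ≠ a := fun hs => D.irr _ (hs ▸ h2)
      by_cases htv : t = v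
      · exact (i3 htv rfl).1
      · exact .inl (.c3 _ (i1 htu htv) (h.oth h2 fun h' => htv h'.2) h3)

theorem cn (h : CovRev D D' u v) {S : Set V} {x y : V} (hc : D.Cn' S x y) : D'.Cn' S x y := by
  rcases hc with rfl | ⟨s, h1, h2⟩ | ⟨t, h1, h2⟩
  · exact .inl rfl
  · obtain ⟨i1, i2, -, i4, -⟩ := h.sim h1
    by_cases hs : s = u
    · obtain ⟨j1, j2, j3, -⟩ := i4 hs rfl
      by_cases hy : y = v
      · subst hy; exact j3
      · subst hs; exact .inr (.inl ⟨s, j1, h.oth h2 fun h' => hy h'.2⟩)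
    · have hl : D'.Lv S x true s := by
        by_cases hv : s = v
        · subst hv; exact i2 rfl rfl
        · exact i1 hs hv
      exact .inr (.inl ⟨s, hl, h.oth h2 fun h' => hs h'.1⟩)
  · obtain ⟨i1, -, i3, -, i5⟩ := h.sim h1
    have fin : D.edge y u → (D'.Lv S x false u ∨ D'.Lv S x false v) → D'.Cn' S x y := by
      rintro hy (h' | h')
      · exact .inr (.inr ⟨u, h', h.pu hy⟩)
      · exact .inr (.inr ⟨v, h', h.pv hy⟩)
    by_cases htu : t = u
    · subst htu; exact fin h2 (i5 rfl rfl)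
    · by_cases htv : t = v
      · subst htv
        obtain ⟨j1, j2, -⟩ := i3 rfl rfl
        rcases (h.cov y).1 h2 with hy | rfl
        · exact fin hy j1
        · exact j2
      · exact .inr (.inr ⟨t, i1 htu htv, h.oth h2 fun h' => htv h'.2⟩)

theorem mequiv (h : CovRev D D' u v) : D.MEquiv D' := by
  intro x y S
  rw [← not_iff_not, not_dSep_iff_cn, not_dSep_iff_cn]
  exact ⟨h.cn, h.symm.cn⟩

end CovRev

open Classical in
theorem exists_covRev [Finite V] (D : Dag V) {u v : V} (huv : D.edge u v)
    (hc : ∀ p, D.edge p v ↔ D.edge p u ∨ p = u) : ∃ D', CovRev D D' u v := by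
  have hne : u ≠ v := Adj.ne' (.inl huv : D.Adj u v)
  have hr := D.rk_lt huv
  refine ⟨⟨fun a b => (D.edge a b ∧ ¬ (a = u ∧ b = v)) ∨ (a = v ∧ b = u), ?_⟩, huv, hc,
    fun a b => Iff.rfl⟩
  apply acyclic_of_rank (fun w => if w = u then 2 * D.rk u + 1 else if w = v then 2 * D.rk u
    else 2 * D.rk w)
  rintro a b (⟨h1, h2⟩ | ⟨rfl, rfl⟩)
  · have hlt := D.rk_lt h1
    by_cases hau : a = u
    · subst hau
      have hbv : b ≠ v := fun h => h2 ⟨rfl, h⟩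
      have hba : b ≠ a := fun h => D.irr a (h ▸ h1)
      simp [hbv, hba]; omega
    · by_cases hbv : b = v
      · subst hbv
        have hau' : D.edge a u := ((hc a).1 h1).resolve_right hau
        have hab : a ≠ b := fun h => D.irr b (h ▸ h1)
        have := D.rk_lt hau'
        simp [hau, hab, hne.symm]; omega
      · simp only [hau, hbv, if_false]
        split_ifs with q1 q2 <;> subst_vars <;> omega
  · simp [hne.symm]

theorem exists_max_aux [Finite V] {f : V → ℕ} {P : V → Prop} (h : ∃ v, P v) :
    ∃ v, P v ∧ ∀ w, P w → f w ≤ f v := by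
  obtain ⟨v, hv⟩ := h
  obtain ⟨w, hw, hw'⟩ := Set.exists_max_image {v | P v} f (Set.toFinite _) ⟨v, hv⟩
  exact ⟨w, hw, hw'⟩

theorem exists_min_aux [Finite V] {f : V → ℕ} {P : V → Prop} (h : ∃ v, P v) :
    ∃ v, P v ∧ ∀ w, P w → f v ≤ f w := by
  obtain ⟨v, hv⟩ := h
  obtain ⟨w, hw, hw'⟩ := Set.exists_min_image {v | P v} f (Set.toFinite _) ⟨v, hv⟩
  exact ⟨w, hw, hw'⟩

theorem diff_step [Finite V] {D D' : Dag V} (hs : SkV D D') {a b : V} (hab : D.edge a b)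
    (hba : D'.edge b a) : ∃ u v, D.edge u v ∧ D'.edge v u ∧
      ∀ p, D.edge p v ↔ D.edge p u ∨ p = u := by
  -- minimal target
  obtain ⟨v, ⟨u0, hu0, hu0'⟩, hmin⟩ := exists_min_aux
    (f := D.rk) (P := fun v => ∃ u, D.edge u v ∧ D'.edge v u) ⟨b, a, hab, hba⟩
  obtain ⟨u, ⟨hu, hu'⟩, hmax⟩ := exists_max_aux
    (f := D.rk) (P := fun u => D.edge u v ∧ D'.edge v u) ⟨u0, hu0, hu0'⟩
  refine ⟨u, v, hu, hu', fun p => ⟨fun hp => ?_, ?_⟩⟩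
  · by_cases hpu : p = u
    · exact .inr hpu
    left
    have hadj : D.Adj p u := by
      by_contra hn
      exact D'.asy hu' ((hs.2 p v u hpu hn).1 ⟨hp, hu⟩).2
    rcases hadj with h | h
    · exact h
    exfalso
    rcases (hs.1 p v).1 (.inl hp) with h' | h'
    · have : D'.edge p u := D'.tri h' hu' ((hs.1 p u).1 (.inr h))
      have := hmin p ⟨u, h, this⟩
      have := D.rk_lt hp
      omega
    · have := hmax p ⟨hp, h'⟩
      have := D.rk_lt h
      omega
  · rintro (hp | rfl)
    · have hpv : p ≠ v := fun h => D.asy hu (h ▸ hp)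
      have hp' : D'.edge p u := by
        rcases (hs.1 p u).1 (.inl hp) with h | h
        · exact h
        · have := hmin u ⟨p, hp, h⟩
          have := D.rk_lt hu
          omega
      refine D.tri hp hu ?_
      by_contra hn
      exact D.asy hu ((hs.2 p u v hpv hn).2 ⟨hp', hu'⟩).2
    · exact hu

theorem mequiv_of_skV [Finite V] {D D' : Dag V} (hs : SkV D D') : D.MEquiv D' := by
  obtain ⟨n, hn⟩ : ∃ n, Set.ncard {q : V × V | D.edge q.1 q.2 ∧ D'.edge q.2 q.1} = n := ⟨_, rfl⟩
  induction n using Nat.strong_induction_on generalizing D with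
  | _ n ih =>
    by_cases hd : ∃ a b, D.edge a b ∧ D'.edge b a
    · obtain ⟨a, b, hab, hba⟩ := hd
      obtain ⟨u, v, h1, h2, h3⟩ := diff_step hs hab hba
      obtain ⟨D1, hD1⟩ := exists_covRev D h1 h3
      have hlt : Set.ncard {q : V × V | D1.edge q.1 q.2 ∧ D'.edge q.2 q.1} < n := by
        rw [← hn]
        refine Set.ncard_lt_ncard ⟨?_, fun hsub => ?_⟩ (Set.toFinite _)
        · rintro ⟨p, q⟩ ⟨e1, e2⟩
          rcases (hD1.rev p q).1 e1 with h | ⟨h, h'⟩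
          · exact ⟨h.1, e2⟩
          · have h : p = v := h
            have h' : q = u := h'
            subst h h'
            exact (D'.asy h2 e2).elim
        · have hm : (u, v) ∈ {q : V × V | D1.edge q.1 q.2 ∧ D'.edge q.2 q.1} := hsub ⟨h1, h2⟩
          exact D1.asy hD1.vu hm.1
      have := ih _ hlt (hD1.skV.symm.trans hs) rfl
      intro x y S
      exact (hD1.mequiv x y S).trans (this x y S)
    · push Not at hd
      have he : D.edge = D'.edge := by
        funext a b
        apply propext
        constructor
        · intro h
          exact ((hs.1 a b).1 (.inl h)).resolve_right (hd a b h)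
        · intro h
          refine ((hs.1 a b).2 (.inl h)).resolve_right fun h' => hd b a h' h
      have : D = D' := by
        cases D; cases D'; cases he; rfl
      subst this
      exact fun x y S => Iff.rfl

theorem cpDir_iff [Fintype V] {D : Dag V} {a b : V} : D.CpDir a b ↔ Meek D a b := by
  constructor
  · intro h
    have hab : D.edge a b := h D fun x y S => Iff.rfl
    by_contra hn
    obtain ⟨D', h1, h2⟩ := exists_flip D (x := b) (y := a) (.inr ⟨hab, hn⟩)
    exact D'.asy h2 (h D' (mequiv_of_skV h1))
  · intro h D' hD'
    exact h.sound (skV_of_mequiv hD')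

end Dag


/-- The CPDAG `G` of the MEC of a DAG contains no partially directed
cycle: there is no sequence of `k ≥ 3` distinct nodes `f 0, …, f (k-1)` such that each
consecutive pair (cyclically) is joined by an undirected edge or an edge directed
forwards in `G`, with at least one of these edges directed. -/
theorem cpdag_no_partially_directed_cycle
    {V : Type*} [Fintype V] (D : Dag V) :
    ¬ ∃ (k : ℕ) (f : ℕ → V), 3 ≤ k ∧
        (∀ i j : ℕ, i < k → j < k → f i = f j → i = j) ∧
        (∀ i : ℕ, i < k →
          D.CpUndir (f i) (f ((i + 1) % k)) ∨ D.CpDir (f i) (f ((i + 1) % k))) ∧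
        (∃ i : ℕ, i < k ∧ D.CpDir (f i) (f ((i + 1) % k))) := by
  rintro ⟨k, f, hk, -, hf, i, hi, hdir⟩
  -- a directed edge followed by a partially directed walk gives a directed walk
  have step : ∀ a b c, Relation.TransGen D.CpDir a b → (D.CpUndir b c ∨ D.CpDir b c) →
      Relation.TransGen D.CpDir a c := by
    intro a b c hab hbc
    rcases hbc with ⟨n0, n1, n2⟩ | hbc
    · rw [Dag.cpDir_iff] at n1 n2
      cases hab with
      | single h => exact .single (Dag.cpDir_iff.2 ((Dag.cpDir_iff.1 h).prop c n0 n1 n2))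
      | tail h h' => exact h.tail (Dag.cpDir_iff.2 ((Dag.cpDir_iff.1 h').prop c n0 n1 n2))
    · exact hab.tail hbc
  have walk : ∀ m, Relation.TransGen D.CpDir (f i) (f ((i + 1 + m) % k)) := by
    intro m
    induction m with
    | zero => exact .single hdir
    | succ m ih =>
      have := step _ _ _ ih (hf ((i + 1 + m) % k) (Nat.mod_lt _ (by omega)))
      rwa [Nat.mod_add_mod] at this
  have hcyc := walk (k - 1)
  rw [show i + 1 + (k - 1) = i + k by omega, Nat.add_mod_right, Nat.mod_eq_of_lt hi] at hcyc
  have mono : ∀ b, Relation.TransGen D.CpDir (f i) b → D.rk (f i) < D.rk b := by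
    intro b hb
    induction hb with
    | single h => exact D.rk_lt (Dag.cpDir_iff.1 h).edge
    | tail _ h ih => exact ih.trans (D.rk_lt (Dag.cpDir_iff.1 h).edge)
  exact lt_irrefl _ (mono _ hcyc)
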